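/- Let G be a bounded measurable subset of ℝ² with finite Lebesgue measure |G|. For all smooth compactly supported vector fields u, v, w : ℝ² → ℝ² with supports contained in G, the trilinear form satisfies |𝔞(u,v,w)| ≤ (√|G|/2) · |u|_{1,2} · |v|_{1,2} · |w|_{1,2}. -/

import Mathlib

open MeasureTheory

/-- Partial derivative `∂f/∂x_j` of a scalar field on `ℝ²`. -/
noncomputable def pd (f : EuclideanSpace ℝ (Fin 2) → ℝ) (j : Fin 2)
    (x : EuclideanSpace ℝ (Fin 2)) : ℝ :=
  fderiv ℝ f x (EuclideanSpace.single j 1)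

/-- The Dirichlet (gradient `L²`) norm `|u|_{1,2}` of a vector field on `ℝ²`. -/
noncomputable def dirichletNorm (u : EuclideanSpace ℝ (Fin 2) → Fin 2 → ℝ) : ℝ :=
  Real.sqrt (∫ x, ∑ i : Fin 2, ∑ j : Fin 2, (pd (fun y => u y i) j x) ^ 2)

/-- The trilinear form `𝔞(u,v,w) = ∫ Σ_{i,j} uʲ ∂vⁱ/∂x_j wⁱ dx`. -/
noncomputable def triFormA (u v w : EuclideanSpace ℝ (Fin 2) → Fin 2 → ℝ) : ℝ :=
  ∫ x, ∑ i : Fin 2, ∑ j : Fin 2, u x j * pd (fun y => v y i) j x * w x i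

/-!
The bound rests on Ladyzhenskaya's inequality
`∫ |f|⁴ ≤ (∫ |f|²) (∫ |∂₀f|²)^{1/2} (∫ |∂₁f|²)^{1/2}`. Integrating `∂ⱼ(|f|²)` along a line from both
ends gives `|f|² ≤ ½ ∫ |∂ⱼ(|f|²)|` for `j = 0, 1`; multiply the two bounds, integrate over the plane
and apply Cauchy–Schwarz to `|∂ⱼ(|f|²)| ≤ 2 |f| |∂ⱼf|`. If `f` vanishes off `G`, then
`∫ |f|² ≤ |G|^{1/2} (∫ |f|⁴)^{1/2}` absorbs the zeroth-order factor, so that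
`(∫ |f|⁴)^{1/2} ≤ ½ |G|^{1/2} |f|_{1,2}²`. The trilinear bound follows by Hölder's inequality with
exponents `4, 2, 4`.
-/

section IntegralInequalities

variable {α β E F : Type*} [MeasurableSpace α] [MeasurableSpace β]
  [NormedAddCommGroup E] [NormedAddCommGroup F] {μ : Measure α} {ν : Measure β}

theorem integral_norm_mul_norm_le_sqrt_mul_sqrt {f : α → E} {g : α → F}
    (hf : MemLp f 2 μ) (hg : MemLp g 2 μ) :
    ∫ x, ‖f x‖ * ‖g x‖ ∂μ ≤ √(∫ x, ‖f x‖ ^ 2 ∂μ) * √(∫ x, ‖g x‖ ^ 2 ∂μ) := by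
  have h := integral_mul_norm_le_Lp_mul_Lq (μ := μ) (f := fun x => ‖f x‖) (g := fun x => ‖g x‖)
    Real.HolderConjugate.two_two (by simpa using hf.norm) (by simpa using hg.norm)
  simpa [Real.sqrt_eq_rpow] using h

theorem integral_norm_le_sqrt_measureReal_mul_sqrt {f : α → E} {s : Set α} (hs : μ s ≠ ⊤)
    (hf : MemLp f 2 μ) (hfs : Function.support f ⊆ s) :
    ∫ x, ‖f x‖ ∂μ ≤ √(μ.real s) * √(∫ x, ‖f x‖ ^ 2 ∂μ) := by
  have hzero : ∀ x ∉ s, f x = 0 := fun x hx => Function.notMem_support.1 fun h => hx (hfs h)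
  have : IsFiniteMeasure (μ.restrict s) := isFiniteMeasure_restrict.2 hs
  have h : ∫ x in s, ‖f x‖ ∂μ ≤ √(μ.real s) * √(∫ x in s, ‖f x‖ ^ 2 ∂μ) := by
    simpa using integral_norm_mul_norm_le_sqrt_mul_sqrt (memLp_const (1 : ℝ)) (hf.restrict s)
  rwa [setIntegral_eq_integral_of_forall_compl_eq_zero fun x hx => by simp [hzero x hx],
    setIntegral_eq_integral_of_forall_compl_eq_zero (f := fun x => ‖f x‖ ^ 2)
      fun x hx => by simp [hzero x hx]] at h

theorem integral_sq_le_integral_mul_integral_of_le_marginals [SFinite μ] [SFinite ν]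
    {f g h : α × β → ℝ} (hf : 0 ≤ f) (hg : Integrable g (μ.prod ν)) (hh : Integrable h (μ.prod ν))
    (hfg : ∀ x y, f (x, y) ≤ ∫ a, g (a, y) ∂μ) (hfh : ∀ x y, f (x, y) ≤ ∫ b, h (x, b) ∂ν) :
    ∫ z, f z ^ 2 ∂μ.prod ν ≤ (∫ z, g z ∂μ.prod ν) * ∫ z, h z ∂μ.prod ν := by
  calc ∫ z, f z ^ 2 ∂μ.prod ν
      ≤ ∫ z : α × β, (∫ b, h (z.1, b) ∂ν) * ∫ a, g (a, z.2) ∂μ ∂μ.prod ν := by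
        refine integral_mono_of_nonneg (.of_forall fun z => sq_nonneg (f z))
          (hh.integral_prod_left.mul_prod hg.integral_prod_right) (.of_forall fun z => ?_)
        have hx := hfh z.1 z.2
        simpa only [sq] using
          mul_le_mul hx (hfg z.1 z.2) (hf z) ((hf z).trans hx)
    _ = (∫ z, g z ∂μ.prod ν) * ∫ z, h z ∂μ.prod ν := by
        rw [integral_prod_mul (fun x => ∫ b, h (x, b) ∂ν) fun y => ∫ a, g (a, y) ∂μ,
          ← integral_prod h hh, ← integral_prod_symm g hg, mul_comm]

end IntegralInequalities

section CompactSupport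

variable {X E : Type*} [TopologicalSpace X] [NormedAddCommGroup E] {f : X → E}

theorem hasCompactSupport_norm_sq (hc : HasCompactSupport f) :
    HasCompactSupport fun x => ‖f x‖ ^ 2 :=
  hc.comp_left (g := fun y => ‖y‖ ^ 2) (by simp)

theorem memLp_norm_sq_of_hasCompactSupport [MeasurableSpace X] [OpensMeasurableSpace X]
    {μ : Measure X} [IsFiniteMeasureOnCompacts μ] (hf : Continuous f) (hc : HasCompactSupport f)
    (p : ENNReal) : MemLp (fun x => ‖f x‖ ^ 2) p μ :=
  (hf.norm.pow 2).memLp_of_hasCompactSupport (hasCompactSupport_norm_sq hc)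

end CompactSupport

section LineIntegrals

variable {E F : Type*} [NormedAddCommGroup F] [NormedSpace ℝ F] [CompleteSpace F]

theorem norm_le_half_integral_norm_deriv {g : ℝ → F} (hg : ContDiff ℝ 1 g)
    (hc : HasCompactSupport g) (x : ℝ) : ‖g x‖ ≤ 1 / 2 * ∫ t, ‖deriv g t‖ := by
  have hint : Integrable fun t => ‖deriv g t‖ :=
    ((hg.continuous_deriv le_rfl).integrable_of_hasCompactSupport hc.deriv).norm
  have hleft : ‖g x‖ ≤ ∫ t in Set.Iic x, ‖deriv g t‖ := by
    rw [← hc.integral_Iic_deriv_eq hg x]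
    exact norm_integral_le_integral_norm _
  have hright : ‖g x‖ ≤ ∫ t in Set.Ioi x, ‖deriv g t‖ := by
    rw [← norm_neg, ← hc.integral_Ioi_deriv_eq hg x]
    exact norm_integral_le_integral_norm _
  have hsplit :=
    intervalIntegral.integral_Iic_add_Ioi (b := x) hint.integrableOn hint.integrableOn
  linarith

theorem norm_le_half_integral_norm_fderiv_line [NormedAddCommGroup E] [NormedSpace ℝ E]
    {f : E → F} (hf : ContDiff ℝ 1 f) (hc : HasCompactSupport f) {e : E} (he : e ≠ 0)
    (c : E) (s : ℝ) :
    ‖f (c + s • e)‖ ≤ 1 / 2 * ∫ t : ℝ, ‖fderiv ℝ f (c + t • e) e‖ := by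
  have hderiv (t : ℝ) : deriv (fun t : ℝ => f (c + t • e)) t = fderiv ℝ f (c + t • e) e := by
    have hline : HasDerivAt (fun t : ℝ => c + t • e) e t := by
      simpa using ((hasDerivAt_id t).smul_const e).const_add c
    exact ((hf.differentiable one_ne_zero _).hasFDerivAt.comp_hasDerivAt t hline).deriv
  have hclosed : Topology.IsClosedEmbedding fun t : ℝ => c + t • e :=
    (Homeomorph.addLeft c).isClosedEmbedding.comp (isClosedEmbedding_smul_left he)
  simpa only [hderiv] using norm_le_half_integral_norm_deriv (g := fun t : ℝ => f (c + t • e))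
    (hf.comp (by fun_prop)) (hc.comp_isClosedEmbedding hclosed) s

end LineIntegrals

section DirectionalDerivative

variable {E F : Type*} [NormedAddCommGroup E] [NormedSpace ℝ E]

theorem continuous_fderiv_apply_const [NormedAddCommGroup F] [NormedSpace ℝ F] {f : E → F}
    (hf : ContDiff ℝ 1 f) (e : E) : Continuous fun x => fderiv ℝ f x e :=
  (hf.continuous_fderiv one_ne_zero).clm_apply continuous_const

theorem memLp_fderiv_apply_const [MeasurableSpace E] [OpensMeasurableSpace E] {μ : Measure E}
    [IsFiniteMeasureOnCompacts μ] [NormedAddCommGroup F] [NormedSpace ℝ F] {f : E → F}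
    (hf : ContDiff ℝ 1 f) (hc : HasCompactSupport f) (e : E) (p : ENNReal) :
    MemLp (fun x => fderiv ℝ f x e) p μ :=
  (continuous_fderiv_apply_const hf e).memLp_of_hasCompactSupport (hc.fderiv_apply ℝ e)

theorem integral_norm_fderiv_norm_sq_le [MeasurableSpace E] {μ : Measure E}
    [NormedAddCommGroup F] [InnerProductSpace ℝ F] {f : E → F} {e : E} (hd : Differentiable ℝ f)
    (hf : MemLp f 2 μ) (hf' : MemLp (fun x => fderiv ℝ f x e) 2 μ) :
    ∫ x, ‖fderiv ℝ (fun y => ‖f y‖ ^ 2) x e‖ ∂μ ≤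
      2 * (√(∫ x, ‖f x‖ ^ 2 ∂μ) * √(∫ x, ‖fderiv ℝ f x e‖ ^ 2 ∂μ)) := by
  have hpointwise (x : E) :
      ‖fderiv ℝ (fun y => ‖f y‖ ^ 2) x e‖ ≤ 2 * (‖f x‖ * ‖fderiv ℝ f x e‖) := by
    rw [(hd x).hasFDerivAt.norm_sq.fderiv]
    simpa using norm_inner_le_norm (𝕜 := ℝ) (f x) (fderiv ℝ f x e)
  calc ∫ x, ‖fderiv ℝ (fun y => ‖f y‖ ^ 2) x e‖ ∂μ
      ≤ ∫ x, 2 * (‖f x‖ * ‖fderiv ℝ f x e‖) ∂μ :=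
        integral_mono_of_nonneg (.of_forall fun _ => norm_nonneg _)
          ((hf.norm.integrable_mul hf'.norm).const_mul 2) (.of_forall hpointwise)
    _ ≤ 2 * (√(∫ x, ‖f x‖ ^ 2 ∂μ) * √(∫ x, ‖fderiv ℝ f x e‖ ^ 2 ∂μ)) := by
        rw [integral_const_mul]
        gcongr
        exact integral_norm_mul_norm_le_sqrt_mul_sqrt hf hf'

end DirectionalDerivative

section Plane

/-- Cartesian coordinates on the Euclidean plane, used to apply Fubini's theorem there. -/
noncomputable def planeCoordinates : ℝ × ℝ ≃ᵐ EuclideanSpace ℝ (Fin 2) :=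
  MeasurableEquiv.finTwoArrow.symm.trans (MeasurableEquiv.toLp 2 (Fin 2 → ℝ))

theorem measurePreserving_planeCoordinates : MeasurePreserving planeCoordinates :=
  (PiLp.volume_preserving_toLp (Fin 2)).comp (volume_preserving_finTwoArrow ℝ).symm

theorem planeCoordinates_apply (a b : ℝ) : planeCoordinates (a, b) =
    a • EuclideanSpace.single 0 (1 : ℝ) + b • EuclideanSpace.single 1 (1 : ℝ) := by
  ext i
  fin_cases i <;> simp [planeCoordinates, MeasurableEquiv.finTwoArrow]

theorem integral_norm_sq_le_integral_norm_fderiv_mul {F : Type*} [NormedAddCommGroup F]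
    [NormedSpace ℝ F] [CompleteSpace F] {f : EuclideanSpace ℝ (Fin 2) → F} (hf : ContDiff ℝ 1 f)
    (hc : HasCompactSupport f) :
    ∫ x, ‖f x‖ ^ 2 ≤ (1 / 2 * ∫ x, ‖fderiv ℝ f x (EuclideanSpace.single 0 1)‖) *
      (1 / 2 * ∫ x, ‖fderiv ℝ f x (EuclideanSpace.single 1 1)‖) := by
  have hp := measurePreserving_planeCoordinates
  have hpe := planeCoordinates.measurableEmbedding
  have hint (j : Fin 2) : Integrable fun x =>
      1 / 2 * ‖fderiv ℝ f x (EuclideanSpace.single j (1 : ℝ))‖ :=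
    (memLp_one_iff_integrable.1 (memLp_fderiv_apply_const hf hc _ 1)).norm.const_mul _
  rw [← integral_const_mul, ← integral_const_mul, ← hp.integral_comp hpe,
    ← hp.integral_comp hpe fun x => _ * ‖_‖, ← hp.integral_comp hpe fun x => _ * ‖_‖]
  refine integral_sq_le_integral_mul_integral_of_le_marginals (fun _ => norm_nonneg _)
    ((hp.integrable_comp_emb hpe).2 (hint 0)) ((hp.integrable_comp_emb hpe).2 (hint 1))
    (fun a b => ?_) fun a b => ?_
  · simpa [planeCoordinates_apply, integral_const_mul, add_comm] using
      norm_le_half_integral_norm_fderiv_line hf hc (by simp)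
        (b • EuclideanSpace.single 1 (1 : ℝ)) a (e := EuclideanSpace.single 0 (1 : ℝ))
  · simpa [planeCoordinates_apply, integral_const_mul] using
      norm_le_half_integral_norm_fderiv_line hf hc (by simp)
        (a • EuclideanSpace.single 0 (1 : ℝ)) b (e := EuclideanSpace.single 1 (1 : ℝ))

variable {F : Type*} [NormedAddCommGroup F] [InnerProductSpace ℝ F]
  {f : EuclideanSpace ℝ (Fin 2) → F}

theorem ladyzhenskaya_inequality (hf : ContDiff ℝ 1 f) (hc : HasCompactSupport f) :
    ∫ x, ‖f x‖ ^ 4 ≤ (∫ x, ‖f x‖ ^ 2) *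
      (√(∫ x, ‖fderiv ℝ f x (EuclideanSpace.single 0 1)‖ ^ 2) *
        √(∫ x, ‖fderiv ℝ f x (EuclideanSpace.single 1 1)‖ ^ 2)) := by
  have hsq_nonneg : 0 ≤ ∫ x, ‖f x‖ ^ 2 := integral_nonneg fun _ => by positivity
  have hpartial (j : Fin 2) := integral_norm_fderiv_norm_sq_le
    (hf.differentiable one_ne_zero) (hf.continuous.memLp_of_hasCompactSupport hc (μ := volume))
    (memLp_fderiv_apply_const hf hc (EuclideanSpace.single j 1) 2)
  calc ∫ x, ‖f x‖ ^ 4 = ∫ x, ‖‖f x‖ ^ 2‖ ^ 2 := by simp [← pow_mul]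
    _ ≤ _ := integral_norm_sq_le_integral_norm_fderiv_mul
      (hf.norm_sq ℝ) (hasCompactSupport_norm_sq hc)
    _ ≤ _ := mul_le_mul (mul_le_mul_of_nonneg_left (hpartial 0) (by norm_num))
      (mul_le_mul_of_nonneg_left (hpartial 1) (by norm_num)) (by positivity) (by positivity)
    _ = √(∫ x, ‖f x‖ ^ 2) ^ 2 * (√(∫ x, ‖fderiv ℝ f x (EuclideanSpace.single 0 1)‖ ^ 2) *
        √(∫ x, ‖fderiv ℝ f x (EuclideanSpace.single 1 1)‖ ^ 2)) := by ring
    _ = _ := by rw [Real.sq_sqrt hsq_nonneg]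

theorem sqrt_integral_norm_pow_four_le_of_support_subset {G : Set (EuclideanSpace ℝ (Fin 2))}
    (hG : volume G ≠ ⊤) (hf : ContDiff ℝ 1 f) (hc : HasCompactSupport f)
    (hfG : Function.support f ⊆ G) :
    √(∫ x, ‖f x‖ ^ 4) ≤ √(volume.real G) / 2 *
      ∑ j : Fin 2, ∫ x, ‖fderiv ℝ f x (EuclideanSpace.single j 1)‖ ^ 2 := by
  set X := √(∫ x, ‖f x‖ ^ 4)
  set P := fun j : Fin 2 => √(∫ x, ‖fderiv ℝ f x (EuclideanSpace.single j 1)‖ ^ 2)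
  have hsq : ∫ x, ‖f x‖ ^ 2 ≤ √(volume.real G) * X := by
    have h := integral_norm_le_sqrt_measureReal_mul_sqrt (f := fun x => ‖f x‖ ^ 2) hG
      (memLp_norm_sq_of_hasCompactSupport hf.continuous hc 2)
      (fun x hx => hfG fun h => hx (by simp [h]))
    simpa [← pow_mul] using h
  have hself : X * X ≤ X * (√(volume.real G) * (P 0 * P 1)) :=
    calc X * X = ∫ x, ‖f x‖ ^ 4 := Real.mul_self_sqrt (integral_nonneg fun _ => by positivity)
      _ ≤ (∫ x, ‖f x‖ ^ 2) * (P 0 * P 1) := ladyzhenskaya_inequality hf hc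
      _ ≤ √(volume.real G) * X * (P 0 * P 1) := by gcongr
      _ = X * (√(volume.real G) * (P 0 * P 1)) := by ring
  have hP_sq (j : Fin 2) :
      P j ^ 2 = ∫ x, ‖fderiv ℝ f x (EuclideanSpace.single j 1)‖ ^ 2 :=
    Real.sq_sqrt (integral_nonneg fun _ => by positivity)
  calc X ≤ √(volume.real G) * (P 0 * P 1) := by
        rcases (Real.sqrt_nonneg (∫ x, ‖f x‖ ^ 4)).eq_or_lt with hX | hX
        · exact hX.symm.trans_le (by positivity)
        · exact le_of_mul_le_mul_left hself hX
    _ ≤ √(volume.real G) * ((P 0 ^ 2 + P 1 ^ 2) / 2) := by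
        gcongr
        linarith [two_mul_le_add_sq (P 0) (P 1)]
    _ = _ := by rw [Fin.sum_univ_two, ← hP_sq, ← hP_sq]; ring

end Plane

section EuclideanVectors

variable {E ι κ : Type*}

theorem contDiff_toLp_comp [Fintype ι] [NormedAddCommGroup E] [NormedSpace ℝ E] {n : WithTop ℕ∞}
    {u : E → ι → ℝ} (hu : ContDiff ℝ n u) : ContDiff ℝ n fun x => WithLp.toLp 2 (u x) :=
  PiLp.contDiff_toLp.comp hu

theorem hasCompactSupport_toLp_comp [TopologicalSpace E] {u : E → ι → ℝ}
    (hc : HasCompactSupport u) : HasCompactSupport fun x => WithLp.toLp 2 (u x) :=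
  hc.comp_left (WithLp.toLp_zero 2)

theorem abs_sum_sum_mul_mul_le [Fintype ι] [Fintype κ] (a : EuclideanSpace ℝ κ)
    (M : ι → κ → ℝ) (b : EuclideanSpace ℝ ι) :
    |∑ i, ∑ j, a j * M i j * b i| ≤ ‖a‖ * ‖b‖ * √(∑ i, ∑ j, M i j ^ 2) := by
  have h := Finset.sum_mul_sq_le_sq_mul_sq Finset.univ
    (fun k : ι × κ => a k.2 * b k.1) fun k => M k.1 k.2
  simp only [Fintype.sum_prod_type] at h
  have hnorm : ∑ i, ∑ j, (a j * b i) ^ 2 = (‖a‖ * ‖b‖) ^ 2 := by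
    simp only [mul_pow, EuclideanSpace.real_norm_sq_eq, Finset.sum_mul_sum]
    exact Finset.sum_comm
  rw [hnorm] at h
  calc |∑ i, ∑ j, a j * M i j * b i| = |∑ i, ∑ j, a j * b i * M i j| := by
        simp only [mul_right_comm]
    _ ≤ √((‖a‖ * ‖b‖) ^ 2 * ∑ i, ∑ j, M i j ^ 2) := Real.abs_le_sqrt h
    _ = ‖a‖ * ‖b‖ * √(∑ i, ∑ j, M i j ^ 2) := by
        rw [Real.sqrt_mul (sq_nonneg _), Real.sqrt_sq (by positivity)]

end EuclideanVectors

section VectorFields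

variable {u v w : EuclideanSpace ℝ (Fin 2) → Fin 2 → ℝ}

/-- The squared Frobenius norm `|∇u(x)|²` of the Jacobian of a vector field on `ℝ²`, that is, the
integrand of `dirichletNorm u ^ 2`. -/
noncomputable def gradNormSq (u : EuclideanSpace ℝ (Fin 2) → Fin 2 → ℝ)
    (x : EuclideanSpace ℝ (Fin 2)) : ℝ :=
  ∑ i : Fin 2, ∑ j : Fin 2, pd (fun y => u y i) j x ^ 2

theorem gradNormSq_nonneg (u : EuclideanSpace ℝ (Fin 2) → Fin 2 → ℝ)
    (x : EuclideanSpace ℝ (Fin 2)) : 0 ≤ gradNormSq u x := by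
  unfold gradNormSq
  positivity

theorem continuous_gradNormSq (hu : ContDiff ℝ 1 u) : Continuous (gradNormSq u) :=
  continuous_finsetSum _ fun i _ => continuous_finsetSum _ fun _ _ =>
    (continuous_fderiv_apply_const (contDiff_pi.1 hu i) _).pow 2

theorem integrable_gradNormSq (hu : ContDiff ℝ 1 u) (hc : HasCompactSupport u) :
    Integrable (gradNormSq u) :=
  integrable_finsetSum _ fun i _ => integrable_finsetSum _ fun _ _ =>
    (memLp_fderiv_apply_const (contDiff_pi.1 hu i)
      (hc.comp_left (g := fun y : Fin 2 → ℝ => y i) rfl) _ 2).integrable_sq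

theorem gradNormSq_eq_sum_norm_fderiv_toLp (hu : Differentiable ℝ u)
    (x : EuclideanSpace ℝ (Fin 2)) :
    gradNormSq u x = ∑ j : Fin 2,
      ‖fderiv ℝ (fun y => WithLp.toLp 2 (u y)) x (EuclideanSpace.single j 1)‖ ^ 2 := by
  have hU : HasFDerivAt (fun y => WithLp.toLp 2 (u y)) _ x :=
    (PiLp.hasFDerivAt_toLp (𝕜 := ℝ) 2 (u x)).comp x (hu x).hasFDerivAt
  have hpd (i j : Fin 2) : pd (fun y => u y i) j x =
      fderiv ℝ (fun y => WithLp.toLp 2 (u y)) x (EuclideanSpace.single j 1) i := by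
    rw [pd, fderiv_apply (hu x), hU.fderiv]
    rfl
  simp only [gradNormSq, EuclideanSpace.real_norm_sq_eq, hpd]
  exact Finset.sum_comm

theorem dirichletNorm_sq (hu : ContDiff ℝ 1 u) (hc : HasCompactSupport u) :
    dirichletNorm u ^ 2 = ∑ j : Fin 2,
      ∫ x, ‖fderiv ℝ (fun y => WithLp.toLp 2 (u y)) x (EuclideanSpace.single j 1)‖ ^ 2 := by
  calc dirichletNorm u ^ 2 = ∫ x, gradNormSq u x :=
        Real.sq_sqrt (integral_nonneg (gradNormSq_nonneg u))
    _ = _ := by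
        simp only [gradNormSq_eq_sum_norm_fderiv_toLp (hu.differentiable one_ne_zero)]
        exact integral_finsetSum _ fun j _ => (memLp_fderiv_apply_const (contDiff_toLp_comp hu)
          (hasCompactSupport_toLp_comp hc) _ 2).integrable_norm_pow two_ne_zero

theorem sqrt_integral_norm_toLp_pow_four_le_dirichletNorm_sq {G : Set (EuclideanSpace ℝ (Fin 2))}
    (hG : volume G ≠ ⊤) (hu : ContDiff ℝ 1 u) (hc : HasCompactSupport u)
    (huG : Function.support u ⊆ G) :
    √(∫ x, ‖WithLp.toLp 2 (u x)‖ ^ 4) ≤ √(volume.real G) / 2 * dirichletNorm u ^ 2 := by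
  rw [dirichletNorm_sq hu hc]
  exact sqrt_integral_norm_pow_four_le_of_support_subset hG (contDiff_toLp_comp hu)
    (hasCompactSupport_toLp_comp hc) fun x hx => huG fun h => hx (by simp [h])

theorem sqrt_integral_sq_norm_toLp_mul_norm_toLp_le {G : Set (EuclideanSpace ℝ (Fin 2))}
    (hG : volume G ≠ ⊤) (hu : ContDiff ℝ 1 u) (hw : ContDiff ℝ 1 w) (huc : HasCompactSupport u)
    (hwc : HasCompactSupport w) (huG : Function.support u ⊆ G) (hwG : Function.support w ⊆ G) :
    √(∫ x, (‖WithLp.toLp 2 (u x)‖ * ‖WithLp.toLp 2 (w x)‖) ^ 2) ≤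
      √(volume.real G) / 2 * dirichletNorm u * dirichletNorm w := by
  have hu_nonneg : 0 ≤ dirichletNorm u := Real.sqrt_nonneg _
  have hw_nonneg : 0 ≤ dirichletNorm w := Real.sqrt_nonneg _
  refine Real.sqrt_le_iff.2 ⟨by positivity, ?_⟩
  calc ∫ x, (‖WithLp.toLp 2 (u x)‖ * ‖WithLp.toLp 2 (w x)‖) ^ 2
      ≤ √(∫ x, ‖WithLp.toLp 2 (u x)‖ ^ 4) * √(∫ x, ‖WithLp.toLp 2 (w x)‖ ^ 4) := by
        simpa [mul_pow, ← pow_mul] using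
          integral_norm_mul_norm_le_sqrt_mul_sqrt
            (memLp_norm_sq_of_hasCompactSupport (contDiff_toLp_comp hu).continuous
              (hasCompactSupport_toLp_comp huc) 2)
            (memLp_norm_sq_of_hasCompactSupport (contDiff_toLp_comp hw).continuous
              (hasCompactSupport_toLp_comp hwc) 2)
    _ ≤ (√(volume.real G) / 2 * dirichletNorm u ^ 2) *
        (√(volume.real G) / 2 * dirichletNorm w ^ 2) := by
        gcongr
        · exact sqrt_integral_norm_toLp_pow_four_le_dirichletNorm_sq hG hu huc huG
        · exact sqrt_integral_norm_toLp_pow_four_le_dirichletNorm_sq hG hw hwc hwG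
    _ = (√(volume.real G) / 2 * dirichletNorm u * dirichletNorm w) ^ 2 := by ring

theorem abs_triFormA_le_sqrt_mul_dirichletNorm
    (huw : MemLp (fun x => ‖WithLp.toLp 2 (u x)‖ * ‖WithLp.toLp 2 (w x)‖) 2)
    (hv : ContDiff ℝ 1 v) (hv_int : Integrable (gradNormSq v)) :
    |triFormA u v w| ≤
      √(∫ x, (‖WithLp.toLp 2 (u x)‖ * ‖WithLp.toLp 2 (w x)‖) ^ 2) * dirichletNorm v := by
  have hsq (x : EuclideanSpace ℝ (Fin 2)) : √(gradNormSq v x) ^ 2 = gradNormSq v x :=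
    Real.sq_sqrt (gradNormSq_nonneg v x)
  have hgrad : MemLp (fun x => √(gradNormSq v x)) 2 :=
    (memLp_two_iff_integrable_sq (continuous_gradNormSq hv).sqrt.aestronglyMeasurable).2
      (by simpa only [hsq] using hv_int)
  calc |triFormA u v w|
      ≤ ∫ x, ‖WithLp.toLp 2 (u x)‖ * ‖WithLp.toLp 2 (w x)‖ * √(gradNormSq v x) :=
        norm_integral_le_of_norm_le
          (f := fun x => ∑ i, ∑ j, u x j * pd (fun y => v y i) j x * w x i)
          (huw.integrable_mul hgrad) (.of_forall fun x =>
            abs_sum_sum_mul_mul_le (WithLp.toLp 2 (u x)) _ (WithLp.toLp 2 (w x)))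
    _ ≤ √(∫ x, (‖WithLp.toLp 2 (u x)‖ * ‖WithLp.toLp 2 (w x)‖) ^ 2) *
        √(∫ x, gradNormSq v x) := by
        simpa [hsq, abs_of_nonneg (Real.sqrt_nonneg _)] using
          integral_norm_mul_norm_le_sqrt_mul_sqrt huw hgrad

theorem triFormA_bound_general {G : Set (EuclideanSpace ℝ (Fin 2))} (hG : volume G ≠ ⊤)
    (hu : ContDiff ℝ 1 u) (hv : ContDiff ℝ 1 v) (hw : ContDiff ℝ 1 w)
    (huc : HasCompactSupport u) (hwc : HasCompactSupport w) (hv_int : Integrable (gradNormSq v))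
    (huG : Function.support u ⊆ G) (hwG : Function.support w ⊆ G) :
    |triFormA u v w| ≤
      √(volume.real G) / 2 * dirichletNorm u * dirichletNorm v * dirichletNorm w := by
  have huw : MemLp (fun x => ‖WithLp.toLp 2 (u x)‖ * ‖WithLp.toLp 2 (w x)‖) 2 :=
    ((contDiff_toLp_comp hu).continuous.norm.mul
      (contDiff_toLp_comp hw).continuous.norm).memLp_of_hasCompactSupport
      (hasCompactSupport_toLp_comp huc).norm.mul_right
  calc |triFormA u v w|
      ≤ √(∫ x, (‖WithLp.toLp 2 (u x)‖ * ‖WithLp.toLp 2 (w x)‖) ^ 2) * dirichletNorm v :=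
        abs_triFormA_le_sqrt_mul_dirichletNorm huw hv hv_int
    _ ≤ √(volume.real G) / 2 * dirichletNorm u * dirichletNorm w * dirichletNorm v :=
        mul_le_mul_of_nonneg_right
          (sqrt_integral_sq_norm_toLp_mul_norm_toLp_le hG hu hw huc hwc huG hwG)
          (Real.sqrt_nonneg _)
    _ = √(volume.real G) / 2 * dirichletNorm u * dirichletNorm v * dirichletNorm w := by ring

end VectorFields

/-- Continuity bound for the trilinear form:
`|𝔞(u,v,w)| ≤ (√|G|/2)·|u|_{1,2}·|v|_{1,2}·|w|_{1,2}`. -/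
theorem triFormA_bound
    (G : Set (EuclideanSpace ℝ (Fin 2)))
    (hGmeas : MeasurableSet G) (hGbdd : Bornology.IsBounded G)
    (u v w : EuclideanSpace ℝ (Fin 2) → Fin 2 → ℝ)
    (hu : ContDiff ℝ (⊤ : ℕ∞) u) (hv : ContDiff ℝ (⊤ : ℕ∞) v) (hw : ContDiff ℝ (⊤ : ℕ∞) w)
    (husupp : HasCompactSupport u) (hvsupp : HasCompactSupport v)
    (hwsupp : HasCompactSupport w)
    (huG : tsupport u ⊆ G) (hvG : tsupport v ⊆ G) (hwG : tsupport w ⊆ G) :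
    |triFormA u v w| ≤
      Real.sqrt (volume G).toReal / 2 *
        dirichletNorm u * dirichletNorm v * dirichletNorm w := by
  have h1 : (1 : WithTop ℕ∞) ≤ (⊤ : ℕ∞) := by exact_mod_cast le_top
  exact triFormA_bound_general hGbdd.measure_lt_top.ne (hu.of_le h1) (hv.of_le h1) (hw.of_le h1)
    husupp hwsupp (integrable_gradNormSq (hv.of_le h1) hvsupp)
    ((subset_tsupport u).trans huG) ((subset_tsupport w).trans hwG)
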